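/- Let 0 → A → B →^π Q → 0 be a short exact sequence of R-modules with pQ = 0 (identify A with its image in B). Then: (i) for every integer j ≥ 0 there is a well-defined R-linear map c_j : Q → p^j A / p^{j+1} A sending q ∈ Q to the class of p^j(p·q̃) for any lift q̃ ∈ B of q (note p·q̃ ∈ A since pQ = 0); (ii) there is an exact sequence of R-modules 0 → coker(c_0) → B/pB → Q → 0, where the first map is induced by the inclusion A ⊆ B and the second by π; and (iii) for every j ≥ 1 there is an exact sequence 0 → coker(c_j) → p^j B / p^{j+1} B → im(c_{j-1}) → 0, where the first map is induced by the inclusion p^j A ⊆ p^j B and the second map sends the class of p^j b (for b ∈ B) to the class of p^{j-1}(p·b) in p^{j-1} A / p^j A (note p·b ∈ A since π(p·b) = p·π(b) = 0). -/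

import Mathlib

/-!
Context: `R` a commutative ring, `p ∈ R`.  For a submodule `A` of an `R`-module `B` we
write `p^j A` for `Ideal.span {p^j} • A` and `gr_p^j A := p^j A / p^{j+1} A`.

STATEMENT 11: given a short exact sequence `0 → A → B →^π Q → 0` of `R`-modules with
`pQ = 0` (where `A` is identified with its image in `B`, i.e. `A = ker π`):
(i) for each `j ≥ 0` there is a well-defined `R`-linear map `c_j : Q → p^j A / p^{j+1} A`
sending `q` to the class of `p^j (p·q̃)` for any lift `q̃` of `q`;
(ii) there is an exact sequence `0 → coker c₀ → B/pB → Q → 0`, the first map induced by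
the inclusion `A ⊆ B` and the second by `π`;
(iii) for every `j ≥ 1` (written below with `j + 1` in place of `j`) there is an exact
sequence `0 → coker c_j → p^j B / p^{j+1} B → im c_{j-1} → 0`, the first map induced by
the inclusion `p^j A ⊆ p^j B` and the second sending the class of `p^j b` to the class
of `p^{j-1}(p·b)`; exactness at the right means the range of the second map is the range
of `c_{j-1}`.
-/

/-- The submodule `p^j A` of `B`. -/
abbrev pPow (R : Type*) [CommRing R] (p : R) (j : ℕ) {B : Type*} [AddCommGroup B]
    [Module R B] (A : Submodule R B) : Submodule R B :=
  Ideal.span {p ^ j} • A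

/-- The graded piece `gr_p^j A = p^j A / p^{j+1} A`. -/
abbrev grQuot (R : Type*) [CommRing R] (p : R) (j : ℕ) {B : Type*} [AddCommGroup B]
    [Module R B] (A : Submodule R B) :=
  ↥(pPow R p j A) ⧸ (pPow R p (j + 1) A).comap (pPow R p j A).subtype

/-!
Since `pB ⊆ A`, the submodules of `B` involved form a decreasing chain
`⋯ ≥ p^j A ≥ p^{j+1} B ≥ p^{j+1} A ≥ p^{j+2} B ≥ ⋯`, and the image of `c_j` is
`p^{j+1} B / p^{j+1} A` inside `p^j A / p^{j+1} A`, so that its cokernel is `p^j A / p^{j+1} B`.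
The exact sequences are then instances of `0 → K / L → N / L → N / K → 0`, for
`N ≥ K ≥ L` equal to `B ≥ A ≥ pB` in (ii) and to `p^{j+1} B ≥ p^{j+1} A ≥ p^{j+2} B` in (iii).
-/

section Subquotient

variable {R M : Type*} [Ring R] [AddCommGroup M] [Module R M] {K K' K'' L L' : Submodule R M}

/-- The map `K / L → K' / L'` of subquotients of `M` induced by inclusions `K ≤ K'` and `L ≤ L'`.
The quotient `K / L` does not presuppose `L ≤ K`: it stands for `K / (K ⊓ L)`. -/
def subquotientMap (hK : K ≤ K') (hL : L ≤ L') :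
    (K ⧸ L.comap K.subtype) →ₗ[R] K' ⧸ L'.comap K'.subtype :=
  Submodule.mapQ _ _ (Submodule.inclusion hK) fun _ hx ↦ hL hx

theorem ker_subquotientMap (hK : K ≤ K') (hL : L ≤ L') :
    LinearMap.ker (subquotientMap hK hL) = (L'.comap K.subtype).map (Submodule.mkQ _) :=
  Submodule.ker_mapQ ..

theorem range_subquotientMap (hK : K ≤ K') (hL : L ≤ L') :
    LinearMap.range (subquotientMap hK hL) = (K.comap K'.subtype).map (Submodule.mkQ _) := by
  rw [subquotientMap, Submodule.range_mapQ, Submodule.range_inclusion]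

theorem exact_subquotientMap (hK : K ≤ K') (hL : L ≤ L') (hK' : K' ≤ K'') (hL' : L' ≤ K) :
    Function.Exact (subquotientMap hK hL) (subquotientMap hK' hL') := by
  rw [LinearMap.exact_iff, ker_subquotientMap, range_subquotientMap]

end Subquotient

theorem exact_range_liftQ {R M N P S : Type*} [Ring R] [AddCommGroup M] [AddCommGroup N]
    [AddCommGroup P] [AddCommGroup S] [Module R M] [Module R N] [Module R P] [Module R S]
    {e : M →ₗ[R] N} {f : N →ₗ[R] P} {g : P →ₗ[R] S} (hef : LinearMap.range e ≤ LinearMap.ker f)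
    (hfg : Function.Exact f g) : Function.Exact ((LinearMap.range e).liftQ f hef) g := by
  rw [LinearMap.exact_iff, Submodule.range_liftQ, hfg.linearMap_ker_eq]

theorem range_lsmul {R M : Type*} [CommRing R] [AddCommMonoid M] [Module R M] (r : R) :
    LinearMap.range (LinearMap.lsmul R M r) = Ideal.span {r} • ⊤ := by
  rw [Submodule.ideal_span_singleton_smul, LinearMap.range_eq_map]
  rfl

section GradedPieces

variable {R : Type*} [CommRing R] {p : R} {B Q : Type*} [AddCommGroup B] [Module R B]
  [AddCommGroup Q] [Module R Q] {A A' : Submodule R B} {π : B →ₗ[R] Q}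

theorem pPow_zero : pPow R p 0 A = A := by
  simp [pPow]

theorem pPow_one : pPow R p 1 A = Ideal.span {p} • A := by
  rw [pPow, pow_one]

theorem pPow_mono (h : A ≤ A') (j : ℕ) : pPow R p j A ≤ pPow R p j A' :=
  Submodule.smul_mono le_rfl h

theorem pPow_succ_le (h : Ideal.span {p} • A' ≤ A) (j : ℕ) :
    pPow R p (j + 1) A' ≤ pPow R p j A := by
  rw [pPow, pow_succ, ← Ideal.span_singleton_mul_span_singleton, Submodule.mul_smul]
  exact Submodule.smul_mono le_rfl h

theorem pow_smul_mem_pPow (j : ℕ) {a : B} (ha : a ∈ A) : p ^ j • a ∈ pPow R p j A :=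
  Submodule.smul_mem_smul (Ideal.mem_span_singleton_self _) ha

theorem span_singleton_smul_top_le_ker (hpQ : ∀ q : Q, p • q = 0) :
    Ideal.span {p} • (⊤ : Submodule R B) ≤ LinearMap.ker π := by
  rw [Submodule.ideal_span_singleton_smul]
  rintro _ ⟨b, -, rfl⟩
  simp [hpQ]

/-- The map `gr_p^j A → gr_p^j A'` induced by an inclusion `A ⊆ A'`. -/
def grMap (h : A ≤ A') (j : ℕ) : grQuot R p j A →ₗ[R] grQuot R p j A' :=
  subquotientMap (pPow_mono h j) (pPow_mono h (j + 1))

/-- The map `gr_p^{j+1} A' → gr_p^j A` induced by the inclusion `p^{j+1} A' ⊆ p^j A`, which holds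
when `pA' ⊆ A`. -/
def grShift (h : Ideal.span {p} • A' ≤ A) (j : ℕ) : grQuot R p (j + 1) A' →ₗ[R] grQuot R p j A :=
  subquotientMap (pPow_succ_le h j) (pPow_succ_le h (j + 1))

theorem exact_grMap_grShift (h : A ≤ A') (h' : Ideal.span {p} • A' ≤ A) (j : ℕ) :
    Function.Exact (grMap h (j + 1)) (grShift h' j) :=
  exact_subquotientMap _ _ _ _

/-- The map `gr_p^0 A → B / pB` induced by the inclusion `p^0 A = A ⊆ B`. -/
def grZeroToQuot (p : R) (A : Submodule R B) :
    grQuot R p 0 A →ₗ[R] B ⧸ (Ideal.span {p} • ⊤ : Submodule R B) :=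
  Submodule.mapQ _ _ (pPow R p 0 A).subtype <|
    Submodule.comap_mono <| (pPow_mono le_top 1).trans pPow_one.le

theorem exact_grZeroToQuot_liftQ (hpB : Ideal.span {p} • ⊤ ≤ LinearMap.ker π) :
    Function.Exact (grZeroToQuot p (LinearMap.ker π)) (Submodule.liftQ _ π hpB) := by
  rw [LinearMap.exact_iff, grZeroToQuot, Submodule.ker_liftQ, Submodule.range_mapQ,
    Submodule.range_subtype, pPow_zero]

/-- The map `B → gr_p^j A` sending `b` to the class of `p ^ (j + 1) b`, where `pB ⊆ A`. -/
def powSuccSMulMk (hA : Ideal.span {p} • ⊤ ≤ A) (j : ℕ) : B →ₗ[R] grQuot R p j A :=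
  Submodule.mkQ _ ∘ₗ LinearMap.codRestrict _ (LinearMap.lsmul R B (p ^ (j + 1)))
    fun _ ↦ pPow_succ_le hA j (pow_smul_mem_pPow _ Submodule.mem_top)

theorem range_powSuccSMulMk (hA : Ideal.span {p} • ⊤ ≤ A) (j : ℕ) :
    LinearMap.range (powSuccSMulMk hA j) =
      ((pPow R p (j + 1) ⊤).comap (pPow R p j A).subtype).map (Submodule.mkQ _) := by
  rw [powSuccSMulMk, LinearMap.range_comp, LinearMap.range_codRestrict, range_lsmul]

theorem le_ker_powSuccSMulMk (hA : Ideal.span {p} • ⊤ ≤ A) (j : ℕ) :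
    A ≤ LinearMap.ker (powSuccSMulMk hA j) := fun _ ha ↦
  (Submodule.Quotient.mk_eq_zero _).2 (pow_smul_mem_pPow (j + 1) ha)

/-- The map `c_j : Q → gr_p^j A` of an extension `0 → A → B → Q → 0` with `pQ = 0`, sending `π b`
to the class of `p ^ j (p b)`. Here `A` is `ker π`, and `pQ = 0` is expressed as `pB ⊆ A`. -/
noncomputable def connectingMap (hπ : Function.Surjective π)
    (hpB : Ideal.span {p} • ⊤ ≤ LinearMap.ker π) (j : ℕ) :
    Q →ₗ[R] grQuot R p j (LinearMap.ker π) :=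
  (LinearMap.ker π).liftQ (powSuccSMulMk hpB j) (le_ker_powSuccSMulMk hpB j) ∘ₗ
    (π.quotKerEquivOfSurjective hπ).symm

theorem grQuot_mk_pow_succ_smul (j : ℕ) {b : B} (hb : p • b ∈ A)
    (h : p ^ (j + 1) • b ∈ pPow R p j A) :
    (Submodule.Quotient.mk ⟨p ^ (j + 1) • b, h⟩ : grQuot R p j A) =
      Submodule.Quotient.mk ⟨p ^ j • p • b, pow_smul_mem_pPow j hb⟩ := by
  simp only [pow_succ, mul_smul]

variable (hπ : Function.Surjective π) (hpB : Ideal.span {p} • ⊤ ≤ LinearMap.ker π)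

theorem connectingMap_apply (j : ℕ) (b : B) (hb : p • b ∈ LinearMap.ker π) :
    connectingMap hπ hpB j (π b) =
      Submodule.Quotient.mk ⟨p ^ j • p • b, pow_smul_mem_pPow j hb⟩ := by
  rw [connectingMap, LinearMap.comp_apply, LinearEquiv.coe_coe,
    LinearMap.quotKerEquivOfSurjective_symm_apply, Submodule.liftQ_apply]
  exact grQuot_mk_pow_succ_smul j hb _

theorem range_connectingMap (j : ℕ) :
    LinearMap.range (connectingMap hπ hpB j) =
      ((pPow R p (j + 1) ⊤).comap (pPow R p j (LinearMap.ker π)).subtype).map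
        (Submodule.mkQ _) := by
  rw [connectingMap, LinearEquiv.range_comp, Submodule.range_liftQ, range_powSuccSMulMk]

theorem exact_connectingMap_grMap (j : ℕ) :
    Function.Exact (connectingMap hπ hpB j) (grMap le_top j) := by
  rw [LinearMap.exact_iff, grMap, ker_subquotientMap, range_connectingMap]

theorem range_grShift_eq_range_connectingMap (j : ℕ) :
    LinearMap.range (grShift hpB j) = LinearMap.range (connectingMap hπ hpB j) := by
  rw [grShift, range_subquotientMap, range_connectingMap]

theorem exact_connectingMap_grZeroToQuot :
    Function.Exact (connectingMap hπ hpB 0) (grZeroToQuot p (LinearMap.ker π)) := by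
  rw [LinearMap.exact_iff, grZeroToQuot, Submodule.ker_mapQ, range_connectingMap, ← pPow_one]

end GradedPieces

theorem graded_pieces_of_extension
    (R : Type*) [CommRing R] (p : R)
    (B Q : Type*) [AddCommGroup B] [Module R B] [AddCommGroup Q] [Module R Q]
    (A : Submodule R B) (π : B →ₗ[R] Q)
    (hπ : Function.Surjective π) (hker : LinearMap.ker π = A)
    (hpQ : ∀ q : Q, p • q = 0) :
    ∃ c : (j : ℕ) → Q →ₗ[R] grQuot R p j A,
      -- (i) : the maps `c_j`, well defined independently of the chosen lift
      (∀ (j : ℕ) (b : B) (hb : p • b ∈ A),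
        c j (π b) = Submodule.Quotient.mk
          ⟨p ^ j • (p • b),
            Submodule.smul_mem_smul (Ideal.mem_span_singleton_self _) hb⟩) ∧
      -- (ii) : 0 → coker c₀ → B/pB → Q → 0
      (∃ (ι : (grQuot R p 0 A ⧸ LinearMap.range (c 0)) →ₗ[R]
            (B ⧸ (Ideal.span {p} • (⊤ : Submodule R B))))
          (π' : (B ⧸ (Ideal.span {p} • (⊤ : Submodule R B))) →ₗ[R] Q),
        (∀ x : ↥(pPow R p 0 A),
          ι (Submodule.Quotient.mk (Submodule.Quotient.mk x)) =
            Submodule.Quotient.mk (x : B)) ∧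
        (∀ b : B, π' (Submodule.Quotient.mk b) = π b) ∧
        Function.Injective ι ∧ Function.Exact ι π' ∧ Function.Surjective π') ∧
      -- (iii) : 0 → coker c_{j+1} → p^{j+1}B/p^{j+2}B → im c_j → 0
      (∀ j : ℕ,
        ∃ (ι : (grQuot R p (j + 1) A ⧸ LinearMap.range (c (j + 1))) →ₗ[R]
              grQuot R p (j + 1) (⊤ : Submodule R B))
          (d : grQuot R p (j + 1) (⊤ : Submodule R B) →ₗ[R] grQuot R p j A),
        (∀ x : ↥(pPow R p (j + 1) A),
          ι (Submodule.Quotient.mk (Submodule.Quotient.mk x)) =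
            Submodule.Quotient.mk
              ⟨(x : B), Submodule.smul_mono le_rfl le_top x.2⟩) ∧
        (∀ (b : B) (hb : p • b ∈ A),
          d (Submodule.Quotient.mk
              ⟨p ^ (j + 1) • b,
                Submodule.smul_mem_smul (Ideal.mem_span_singleton_self _)
                  Submodule.mem_top⟩) =
            Submodule.Quotient.mk
              ⟨p ^ j • (p • b),
                Submodule.smul_mem_smul (Ideal.mem_span_singleton_self _) hb⟩) ∧
        Function.Injective ι ∧ Function.Exact ι d ∧
        LinearMap.range d = LinearMap.range (c j)) := by
  subst hker
  have hpB := span_singleton_smul_top_le_ker (B := B) (π := π) hpQ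
  refine ⟨connectingMap hπ hpB, connectingMap_apply hπ hpB, ?_, fun j ↦ ?_⟩
  · have hc := exact_connectingMap_grZeroToQuot hπ hpB
    exact ⟨_, Submodule.liftQ _ π hpB, fun _ ↦ rfl, fun _ ↦ rfl,
      LinearMap.injective_range_liftQ_of_exact hc,
      exact_range_liftQ _ (exact_grZeroToQuot_liftQ hpB),
      .of_comp (g := Submodule.mkQ _) hπ⟩
  · have hc := exact_connectingMap_grMap hπ hpB (j + 1)
    exact ⟨_, grShift hpB j, fun _ ↦ rfl, fun _ hb ↦ grQuot_mk_pow_succ_smul j hb _,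
      LinearMap.injective_range_liftQ_of_exact hc,
      exact_range_liftQ _ (exact_grMap_grShift le_top hpB j),
      range_grShift_eq_range_connectingMap hπ hpB j⟩
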